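/- Let P be a finite set of distinct points of ℙ³(ℂ) satisfying the Cayley–Bacharach property for quadrics, and let W ⊂ ℙ³(ℂ) be the projectivization of a proper linear subspace of ℂ⁴ (a point, a line, or a plane). Then the number of points of P not lying in W is never exactly 1. -/

import Mathlib

open MvPolynomial
open scoped Classical

/-- A finite set `P` of points of `ℙ³(ℂ)` satisfies the Cayley–Bacharach property for quadrics
if it is nonempty and, for every `p ∈ P`, every quadric (homogeneous polynomial of degree `2`
in `ℂ[X₀,X₁,X₂,X₃]`) vanishing at all points of `P \ {p}` also vanishes at `p`. -/
def CayleyBacharach (P : Finset (Projectivization ℂ (Fin 4 → ℂ))) : Prop :=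
  P.Nonempty ∧
    ∀ p ∈ P, ∀ Q : MvPolynomial (Fin 4) ℂ, Q.IsHomogeneous 2 →
      (∀ q ∈ P.erase p, eval (Projectivization.rep q) Q = 0) →
      eval (Projectivization.rep p) Q = 0

/-! If `p` were the only point of `P` outside `W`, choose a linear form vanishing on `W` but not at
`p`. Its square is a quadric vanishing at the other points of `P` but not at `p`. Replacing the
square by the `n`-th power gives the same for forms of any degree `n ≠ 0`. -/

section

variable {R K σ : Type*} [CommSemiring R] [Field K]

/-- The Cayley–Bacharach property for forms of degree `n` of a set of points of the projective space
over `K` with coordinates indexed by `σ`. The empty set is allowed. Vanishing at a point is tested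
on the chosen representative, which is harmless because the forms are homogeneous. -/
def IsCayleyBacharach (n : ℕ) (P : Set (Projectivization K (σ → K))) : Prop :=
  ∀ p ∈ P, ∀ Q : MvPolynomial σ K, Q.IsHomogeneous n →
    (∀ q ∈ P \ {p}, eval q.rep Q = 0) → eval p.rep Q = 0

variable [Finite σ]

theorem exists_isHomogeneous_one_forall_eval_eq (f : (σ → R) →ₗ[R] R) :
    ∃ L : MvPolynomial σ R, L.IsHomogeneous 1 ∧ ∀ x, eval x L = f x := by
  cases nonempty_fintype σ
  let A := (LinearMap.pi fun _ : Unit ↦ f).toMatrix'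
  refine ⟨A.toMvPolynomial (), A.toMvPolynomial_isHomogeneous (), fun x ↦ ?_⟩
  rw [A.toMvPolynomial_eval_eq_apply, LinearMap.toMatrix'_mulVec, LinearMap.pi_apply]

theorem exists_isHomogeneous_eval_eq_zero_eval_ne_zero_of_notMem {n : ℕ} (hn : n ≠ 0)
    {W : Submodule K (σ → K)} {x : σ → K} (hx : x ∉ W) :
    ∃ Q : MvPolynomial σ K, Q.IsHomogeneous n ∧ (∀ w ∈ W, eval w Q = 0) ∧ eval x Q ≠ 0 := by
  obtain ⟨f, hfx, hfW⟩ := Submodule.exists_le_ker_of_notMem hx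
  obtain ⟨L, hL, hLf⟩ := exists_isHomogeneous_one_forall_eval_eq f
  refine ⟨L ^ n, by simpa only [one_mul] using hL.pow n, fun w hw ↦ ?_, ?_⟩
  · rw [map_pow, hLf, LinearMap.mem_ker.mp (hfW hw), zero_pow hn]
  · rw [map_pow, hLf]
    exact pow_ne_zero n hfx

theorem IsCayleyBacharach.rep_mem {n : ℕ} {P : Set (Projectivization K (σ → K))}
    (hP : IsCayleyBacharach n P) (hn : n ≠ 0) {W : Submodule K (σ → K)}
    {p : Projectivization K (σ → K)} (hp : p ∈ P) (hW : ∀ q ∈ P \ {p}, q.rep ∈ W) :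
    p.rep ∈ W := by
  by_contra hpW
  obtain ⟨Q, hQ, hQW, hQp⟩ := exists_isHomogeneous_eval_eq_zero_eval_ne_zero_of_notMem hn hpW
  exact hQp (hP p hp Q hQ fun q hq ↦ hQW _ (hW q hq))

theorem stmt_15_general {n : ℕ} (hn : n ≠ 0) {P : Set (Projectivization K (σ → K))}
    (hP : IsCayleyBacharach n P) (W : Submodule K (σ → K)) :
    {p ∈ P | p.rep ∉ W}.encard ≠ 1 := by
  intro hcard
  obtain ⟨p, hp⟩ := Set.encard_eq_one.mp hcard
  obtain ⟨hpP, hpW⟩ : p ∈ {p ∈ P | p.rep ∉ W} := hp ▸ Set.mem_singleton p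
  refine hpW (hP.rep_mem hn hpP fun q hq ↦ ?_)
  by_contra hqW
  exact hq.2 (hp ▸ ⟨hq.1, hqW⟩)

end

/-- Let `P` be a finite set of distinct points of `ℙ³(ℂ)` satisfying the
Cayley–Bacharach property for quadrics, and let `W` be the projectivization of a proper linear
subspace of `ℂ⁴` (a point, a line, or a plane).  Then the number of points of `P` not lying in
`W` is never exactly `1`. -/
theorem stmt_15 (P : Finset (Projectivization ℂ (Fin 4 → ℂ))) (h : CayleyBacharach P)
    (W : Submodule ℂ (Fin 4 → ℂ)) (hW : W ≠ ⊤) :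
    (P.filter fun p => Projectivization.rep p ∉ W).card ≠ 1 := by
  have hP : IsCayleyBacharach 2 (P : Set (Projectivization ℂ (Fin 4 → ℂ))) := by
    simpa only [IsCayleyBacharach, Finset.mem_coe, ← Finset.coe_erase] using h.2
  rw [← Nat.cast_ne_one (R := ℕ∞), ← Set.encard_coe_eq_coe_finsetCard, Finset.coe_filter]
  exact stmt_15_general two_ne_zero hP W
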